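/- Let F be an associative A-algebra, B : Ω → F any map, and for a word ω = (ω₁,…,ω_r) set B_ω = B_{ω_r}⋯B_{ω₁} (product in F) and, for r ≥ 2, B_{[ω]} = [B_{ω_r},[B_{ω_{r−1}},[⋯[B_{ω₂},B_{ω₁}]⋯]]] (iterated commutators, [u,v] = uv − vu). Then for every alternal mould M with values in A, every finite subset Ω_f ⊆ Ω and every r ≥ 2, Σ_{ω∈Ω_f^r} M^ω B_ω = (1/r) Σ_{ω∈Ω_f^r} M^ω B_{[ω]}, where Ω_f^r denotes the set of words of length r with all letters in Ω_f. -/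

import Mathlib

/-! Statement 16: contraction of an alternal mould into a comould as a sum of iterated Lie brackets. -/

open scoped Classical

/-- Shuffle coefficient `sh(α, β; ω)`: the number of ways of obtaining `ω` by
interdigitating the letters of `α` and those of `β` while preserving their internal order. -/
noncomputable def sh {Ω : Type*} : List Ω → List Ω → List Ω → ℕ
  | [], [], [] => 1
  | _ :: _, _, [] => 0
  | [], _ :: _, [] => 0
  | [], [], _ :: _ => 0
  | [], b :: β, c :: ω => if b = c then sh [] β ω else 0
  | a :: α, [], c :: ω => if a = c then sh α [] ω else 0
  | a :: α, b :: β, c :: ω =>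
      (if a = c then sh α (b :: β) ω else 0) +
      (if b = c then sh (a :: α) β ω else 0)

/-- Mould multiplication `(M × N)^ω = Σ_{ω = ω¹·ω²} M^{ω¹} N^{ω²}`. -/
noncomputable def mmul {Ω A : Type*} [CommRing A] (M N : List Ω → A) : List Ω → A := fun ω =>
  ∑ i ∈ Finset.range (ω.length + 1), M (ω.take i) * N (ω.drop i)

/-- The unit mould `1^•`. -/
def munit {Ω A : Type*} [CommRing A] : List Ω → A := fun ω => match ω with | [] => 1 | _ => 0

/-- `Σ_ω sh(α,β;ω) M^ω`, realized as a finite sum over the permutations of `α ++ β`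
(the shuffle coefficient vanishes on any word which is not a permutation of `α ++ β`). -/
noncomputable def shSum {Ω A : Type*} [CommRing A] (M : List Ω → A) (α β : List Ω) : A :=
  ∑ ω ∈ (α ++ β).permutations.toFinset, sh α β ω • M ω

/-- A mould is alternal if `M^∅ = 0` and all the shuffle sums vanish. -/
def IsAlternal {Ω A : Type*} [CommRing A] (M : List Ω → A) : Prop :=
  M [] = 0 ∧ ∀ α β : List Ω, α ≠ [] → β ≠ [] → shSum M α β = 0

/-- A mould is symmetral if `M^∅ = 1` and the shuffle sums reproduce the products. -/
def IsSymmetral {Ω A : Type*} [CommRing A] (M : List Ω → A) : Prop :=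
  M [] = 1 ∧ ∀ α β : List Ω, α ≠ [] → β ≠ [] → shSum M α β = M α * M β

/-- `B_∅ = 1`, `B_{ω₁,…,ω_r} = B_{ω_r}⋯B_{ω₁}` (product in `F`). -/
def Bword {Ω F : Type*} [Ring F] (B : Ω → F) : List Ω → F
  | [] => 1
  | w :: ω => Bword B ω * B w

/-- Iterated commutators: applied to the reversed word `(ω_r,…,ω₁)` this computes
`B_{[ω]} = [B_{ω_r},[B_{ω_{r−1}},[⋯[B_{ω₂},B_{ω₁}]⋯]]]`, with `[u,v] = uv − vu`. -/
def lieWord {Ω F : Type*} [Ring F] (B : Ω → F) : List Ω → F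
  | [] => 0
  | [a] => B a
  | a :: b :: l => B a * lieWord B (b :: l) - lieWord B (b :: l) * B a

/-- The list, with multiplicities, of all shuffles of two words. -/
def shuffles {Ω : Type*} : List Ω → List Ω → List (List Ω)
  | [], β => [β]
  | a :: α, [] => [a :: α]
  | a :: α, b :: β =>
      (shuffles α (b :: β)).map (List.cons a) ++ (shuffles (a :: α) β).map (List.cons b)

theorem shuffles_nil_right {Ω : Type*} (α : List Ω) : shuffles α [] = [α] := by
  cases α <;> simp [shuffles]

theorem perm_of_mem_shuffles {Ω : Type*} (α β : List Ω) :
    ∀ ω ∈ shuffles α β, ω.Perm (α ++ β) := by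
  induction α, β using shuffles.induct with
  | case1 β => simp [shuffles]
  | case2 a α => simp [shuffles]
  | case3 a α b β ih₁ ih₂ =>
    intro ω hω
    simp only [shuffles, List.mem_append, List.mem_map] at hω
    rcases hω with ⟨ω', h, rfl⟩ | ⟨ω', h, rfl⟩
    · exact (ih₁ _ h).cons a
    · exact ((ih₂ _ h).cons b).trans List.perm_middle.symm

theorem count_cons_map_cons {Ω : Type*} (a c : Ω) (ω : List Ω) (L : List (List Ω)) :
    (L.map (List.cons a)).count (c :: ω) = if a = c then L.count ω else 0 := by
  split_ifs with h
  · subst h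
    exact List.count_map_of_injective L _ List.cons_injective ω
  · refine List.count_eq_zero.2 fun hmem => ?_
    obtain ⟨_, _, hx⟩ := List.mem_map.1 hmem
    exact h (List.cons.inj hx).1

theorem count_nil_map_cons {Ω : Type*} (a : Ω) (L : List (List Ω)) :
    (L.map (List.cons a)).count [] = 0 :=
  List.count_eq_zero.2 (by simp)

theorem sh_eq_count_shuffles {Ω : Type*} (α β ω : List Ω) :
    sh α β ω = (shuffles α β).count ω := by
  induction α, β, ω using sh.induct with
  | case1 => simp [sh, shuffles]
  | case2 a α β =>
    cases β <;> simp [sh, shuffles, count_nil_map_cons]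
  | case3 b β => simp [sh, shuffles]
  | case4 c ω => simp [sh, shuffles]
  | case5 β c ω ih =>
    simp_all [sh, shuffles, List.count_singleton]
  | case6 b β c ω h =>
    simp [sh, shuffles, h]
  | case7 α c ω ih =>
    simp_all [sh, List.count_singleton, shuffles_nil_right]
  | case8 a α c ω h =>
    simp [sh, shuffles, h]
  | _ => simp_all [sh, shuffles, count_cons_map_cons]

/-- The sum of a mould over all shuffles of two words. -/
def shuffleSum {Ω A : Type*} [CommRing A] (M : List Ω → A) (α β : List Ω) : A :=
  ((shuffles α β).map M).sum

theorem shSum_eq_shuffleSum {Ω A : Type*} [CommRing A] (M : List Ω → A) (α β : List Ω) :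
    shSum M α β = shuffleSum M α β := by
  rw [shSum, shuffleSum, Finset.sum_list_map_count]
  simp only [sh_eq_count_shuffles]
  symm
  trans ∑ ω ∈ (shuffles α β).toFinset, (shuffles α β).count ω • M ω
  · congr!
  apply Finset.sum_subset
  · intro ω hω
    simp only [List.mem_toFinset, List.mem_permutations] at hω ⊢
    exact perm_of_mem_shuffles α β ω hω
  · intro ω _ hω
    rw [List.mem_toFinset] at hω
    rw [List.count_eq_zero.2 hω, zero_smul]

section ShuffleSum

variable {Ω A : Type*} [CommRing A] (M : List Ω → A)

theorem shuffleSum_nil_left (β : List Ω) : shuffleSum M [] β = M β := by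
  simp [shuffleSum, shuffles]

theorem shuffleSum_nil_right (α : List Ω) : shuffleSum M α [] = M α := by
  simp [shuffleSum, shuffles_nil_right]

theorem shuffleSum_cons_cons (a b : Ω) (α β : List Ω) :
    shuffleSum M (a :: α) (b :: β) =
      shuffleSum (fun ω => M (a :: ω)) α (b :: β) +
        shuffleSum (fun ω => M (b :: ω)) (a :: α) β := by
  simp [shuffleSum, shuffles, Function.comp_def]

variable {M}

theorem IsAlternal.neg_one_pow_mul_shuffleSum (hM : IsAlternal M) (p : List Ω) :
    ∀ (c : Ω) (q : List Ω),
      (-1) ^ p.length * shuffleSum (fun ω => M (c :: ω)) p q = M (p.reverse ++ c :: q) := by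
  induction p with
  | nil => simp [shuffleSum_nil_left]
  | cons d p ih =>
    intro c q
    have h := hM.2 (d :: p) (c :: q) (by simp) (by simp)
    rw [shSum_eq_shuffleSum, shuffleSum_cons_cons] at h
    have h' := ih d (c :: q)
    simp only [List.length_cons, List.reverse_cons, List.append_assoc, List.singleton_append]
    rw [← h', eq_neg_of_add_eq_zero_left h]
    ring

end ShuffleSum

/-- The sum of `f` over all words of length `k` with letters in `s`. -/
def wordSum {Ω F : Type*} [AddCommMonoid F] (s : Finset Ω) (k : ℕ) (f : List Ω → F) : F :=
  ∑ v : Fin k → s, f (List.ofFn fun i => (v i : Ω))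

section WordSum

variable {Ω F : Type*}

theorem wordSum_zero [AddCommMonoid F] (s : Finset Ω) (f : List Ω → F) :
    wordSum s 0 f = f [] := by
  simp [wordSum]

theorem wordSum_succ [AddCommMonoid F] (s : Finset Ω) (k : ℕ) (f : List Ω → F) :
    wordSum s (k + 1) f = ∑ a : s, wordSum s k (fun ω => f (a :: ω)) := by
  simp only [wordSum]
  rw [← (Fin.consEquiv fun _ : Fin (k + 1) => s).sum_comp, Fintype.sum_prod_type]
  simp [Fin.consEquiv, List.ofFn_succ]

theorem wordSum_add [AddCommMonoid F] (s : Finset Ω) (k : ℕ) (f g : List Ω → F) :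
    wordSum s k (fun ω => f ω + g ω) = wordSum s k f + wordSum s k g :=
  Finset.sum_add_distrib

theorem wordSum_neg [AddCommGroup F] (s : Finset Ω) (k : ℕ) (f : List Ω → F) :
    wordSum s k (fun ω => -f ω) = -wordSum s k f :=
  Finset.sum_neg_distrib _

theorem wordSum_sum [AddCommMonoid F] {ι : Type*} (t : Finset ι) (s : Finset Ω) (k : ℕ)
    (f : ι → List Ω → F) :
    wordSum s k (fun ω => ∑ i ∈ t, f i ω) = ∑ i ∈ t, wordSum s k (f i) :=
  Finset.sum_comm

theorem wordSum_wordSum_reverse_append [AddCommMonoid F] (s : Finset Ω) (g : List Ω → F) (i : ℕ) :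
    ∀ j, wordSum s i (fun p => wordSum s j (fun q => g (p.reverse ++ q))) =
      wordSum s (i + j) g := by
  induction i with
  | zero => simp [wordSum_zero]
  | succ i ih =>
    intro j
    rw [wordSum_succ, show i + 1 + j = i + (j + 1) by omega, ← ih]
    simp only [wordSum_succ, wordSum_sum, List.reverse_cons, List.append_assoc,
      List.singleton_append]

end WordSum

section Brackets

variable {Ω F : Type*} [Ring F] (B : Ω → F)

/-- `[B_{ω_k}, [⋯ [B_{ω₁}, X] ⋯]]` for `ω = (ω₁,…,ω_k)`. -/
def adWord (ω : List Ω) (X : F) : F :=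
  ω.foldl (fun Y a => B a * Y - Y * B a) X

theorem lieWord_append_singleton (l : List Ω) (c : Ω) :
    lieWord B (l ++ [c]) = l.foldr (fun a Y => B a * Y - Y * B a) (B c) := by
  induction l with
  | nil => rfl
  | cons a l ih =>
    cases l with
    | nil => rfl
    | cons b l => simp only [List.cons_append, lieWord, List.foldr_cons] at ih ⊢; rw [ih]

theorem lieWord_reverse_cons (c : Ω) (ω : List Ω) :
    lieWord B (c :: ω).reverse = adWord B ω (B c) := by
  rw [List.reverse_cons, lieWord_append_singleton, List.foldr_reverse, adWord]

theorem adWord_cons (a : Ω) (ω : List Ω) (X : F) :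
    adWord B (a :: ω) X = adWord B ω (B a * X) - adWord B ω (X * B a) := by
  suffices h : ∀ (ω : List Ω) (X Y : F), adWord B ω (X - Y) = adWord B ω X - adWord B ω Y from
    h ω _ _
  intro ω
  induction ω with
  | nil => simp [adWord]
  | cons b ω ih =>
    intro X Y
    simp only [adWord, List.foldl_cons] at ih ⊢
    rw [← ih]
    congr 1
    noncomm_ring

theorem Bword_append (p q : List Ω) : Bword B (p ++ q) = Bword B q * Bword B p := by
  induction p with
  | nil => simp [Bword]
  | cons a p ih => simp [Bword, ih, mul_assoc]

theorem Bword_reverse_cons (a : Ω) (p : List Ω) :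
    Bword B (a :: p).reverse = B a * Bword B p.reverse := by
  simp [Bword_append, Bword]

variable {A : Type*} [CommRing A] [Algebra A F] (s : Finset Ω)

/-- The contribution to an iterated bracket sum of the words obtained by shuffling a word of
length `i`, multiplied to the right of `X`, with a word of length `j`, multiplied to the left. -/
def splitSum (N : List Ω → A) (X : F) (i j : ℕ) : F :=
  wordSum s i fun p => wordSum s j fun q =>
    ((-1) ^ p.length * shuffleSum N p q) • (Bword B q * X * Bword B p.reverse)

theorem splitSum_zero_succ (N : List Ω → A) (X : F) (j : ℕ) :
    splitSum B s N X 0 (j + 1) =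
      ∑ a : s, splitSum B s (fun ω => N (a :: ω)) (B a * X) 0 j := by
  simp [splitSum, wordSum_zero, wordSum_succ, shuffleSum_nil_left, Bword, mul_assoc]

theorem splitSum_succ_zero (N : List Ω → A) (X : F) (i : ℕ) :
    splitSum B s N X (i + 1) 0 =
      -∑ a : s, splitSum B s (fun ω => N (a :: ω)) (X * B a) i 0 := by
  simp only [splitSum, wordSum_zero, wordSum_succ, shuffleSum_nil_right, Bword_reverse_cons,
    ← Finset.sum_neg_distrib, ← wordSum_neg, List.length_cons, pow_succ, mul_neg, mul_one, neg_mul,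
    neg_smul, mul_assoc]

theorem splitSum_succ_succ (N : List Ω → A) (X : F) (i j : ℕ) :
    splitSum B s N X (i + 1) (j + 1) =
      ∑ a : s, splitSum B s (fun ω => N (a :: ω)) (B a * X) (i + 1) j +
        -∑ a : s, splitSum B s (fun ω => N (a :: ω)) (X * B a) i (j + 1) := by
  have h : ∀ a : s, splitSum B s (fun ω => N (a :: ω)) (B a * X) (i + 1) j =
      ∑ b : s, wordSum s i fun p => wordSum s j fun q =>
        ((-1) ^ (p.length + 1) * shuffleSum (fun ω => N (a :: ω)) (b :: p) q) •
          (Bword B (a :: q) * X * Bword B ((b : Ω) :: p).reverse) := by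
    intro a
    simp only [splitSum, wordSum_succ, Bword, List.length_cons, mul_assoc]
  have h' : ∀ b : s, -splitSum B s (fun ω => N (b :: ω)) (X * B b) i (j + 1) =
      ∑ a : s, wordSum s i fun p => wordSum s j fun q =>
        ((-1) ^ (p.length + 1) * shuffleSum (fun ω => N (b :: ω)) p (a :: q)) •
          (Bword B (a :: q) * X * Bword B ((b : Ω) :: p).reverse) := by
    intro b
    simp only [splitSum, wordSum_succ, wordSum_sum, Bword_reverse_cons,
      ← Finset.sum_neg_distrib, ← wordSum_neg, pow_succ, mul_neg, mul_one, neg_mul,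
      neg_smul, mul_assoc]
  rw [← Finset.sum_neg_distrib]
  simp only [h, h']
  rw [Finset.sum_comm, ← Finset.sum_add_distrib]
  simp only [← Finset.sum_add_distrib, ← wordSum_add, ← add_smul, ← mul_add]
  simp only [splitSum, wordSum_succ, wordSum_sum, List.length_cons, shuffleSum_cons_cons,
    add_comm (shuffleSum (fun ω => N (_ :: ω)) (_ :: _) _)]

theorem wordSum_smul_adWord (k : ℕ) : ∀ (N : List Ω → A) (X : F),
    wordSum s k (fun ω => N ω • adWord B ω X) =
      ∑ ij ∈ Finset.HasAntidiagonal.antidiagonal k, splitSum B s N X ij.1 ij.2 := by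
  induction k with
  | zero => simp [wordSum_zero, splitSum, shuffleSum_nil_left, adWord, Bword]
  | succ k ih =>
    intro N X
    let U : ℕ × ℕ → F := fun ij => match ij.2 with
      | 0 => 0
      | j + 1 => ∑ a : s, splitSum B s (fun ω => N (a :: ω)) (B a * X) ij.1 j
    let V : ℕ × ℕ → F := fun ij => match ij.1 with
      | 0 => 0
      | i + 1 => -∑ a : s, splitSum B s (fun ω => N (a :: ω)) (X * B a) i ij.2
    have hUV : ∀ ij ∈ Finset.HasAntidiagonal.antidiagonal (k + 1), splitSum B s N X ij.1 ij.2 = U ij + V ij := by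
      rintro ⟨_ | i, _ | j⟩ hij
      · simp at hij
      · simp [U, V, splitSum_zero_succ]
      · simp [U, V, splitSum_succ_zero]
      · simp only [U, V, splitSum_succ_succ]
    rw [Finset.sum_congr rfl hUV, Finset.sum_add_distrib, Finset.Nat.sum_antidiagonal_succ',
      Finset.Nat.sum_antidiagonal_succ (f := V)]
    simp only [U, V, zero_add, wordSum_succ, adWord_cons, sub_eq_add_neg, smul_add, smul_neg, wordSum_add,
      wordSum_neg, Finset.sum_add_distrib, Finset.sum_neg_distrib, ih]
    rw [Finset.sum_comm, Finset.sum_comm (s := Finset.univ)]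

theorem IsAlternal.wordSum_smul_lieWord {M : List Ω → A} (hM : IsAlternal M) (k : ℕ) :
    wordSum s (k + 1) (fun ω => M ω • lieWord B ω.reverse) =
      (k + 1) • wordSum s (k + 1) (fun ω => M ω • Bword B ω) := by
  have h : ∀ ij ∈ Finset.HasAntidiagonal.antidiagonal k,
      ∑ c : s, splitSum B s (fun ω => M (c :: ω)) (B c) ij.1 ij.2 =
        wordSum s (k + 1) (fun ω => M ω • Bword B ω) := by
    rintro ⟨i, j⟩ hij
    rw [Finset.HasAntidiagonal.mem_antidiagonal] at hij
    rw [← hij, add_assoc, ← wordSum_wordSum_reverse_append]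
    simp only [splitSum, wordSum_succ, wordSum_sum, hM.neg_one_pow_mul_shuffleSum, Bword_append,
      Bword]
  rw [wordSum_succ]
  simp only [lieWord_reverse_cons, wordSum_smul_adWord]
  rw [Finset.sum_comm, Finset.sum_congr rfl h, Finset.sum_const, Finset.Nat.card_antidiagonal]

end Brackets

theorem stmt_16 {Ω A F : Type*} [Nonempty Ω] [CommRing A] [Algebra ℂ A]
    [Ring F] [Algebra A F] [Algebra ℂ F] [IsScalarTower ℂ A F]
    (B : Ω → F) (M : List Ω → A) (hM : IsAlternal M) (Ωf : Finset Ω) (r : ℕ) (hr : 2 ≤ r) :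
    ∑ v : Fin r → Ωf, M (List.ofFn fun i => (v i : Ω)) • Bword B (List.ofFn fun i => (v i : Ω))
      = (r : ℂ)⁻¹ •
        ∑ v : Fin r → Ωf, M (List.ofFn fun i => (v i : Ω)) •
          lieWord B (List.ofFn fun i => (v i : Ω)).reverse := by
  obtain ⟨k, rfl⟩ : ∃ k, r = k + 1 := ⟨r - 1, by omega⟩
  have h := hM.wordSum_smul_lieWord B Ωf k
  simp only [wordSum] at h
  rw [h, ← Nat.cast_smul_eq_nsmul ℂ, inv_smul_smul₀ (Nat.cast_ne_zero.2 k.succ_ne_zero)]
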